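/- If D ⊆ 𝒫 is weakly compact and X ∈ L^1_s(D), then the set of extreme measures 𝒳_D(X) is nonempty, i.e., there exists Q ∈ D with E_Q[X] = inf_{Q'∈D} E_{Q'}[X] ∈ (−∞, ∞). -/

import Mathlib

open MeasureTheory Filter Set
open scoped ENNReal

variable {Ω : Type*} [MeasurableSpace Ω]

/-- Densities of probability measures absolutely continuous w.r.t. `P`. -/
def Dens (P : Measure Ω) : Set (Ω → ℝ) :=
  {Z | Measurable Z ∧ (∀ ω, 0 ≤ Z ω) ∧ ∫⁻ ω, ENNReal.ofReal (Z ω) ∂P = 1}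

/-- `E_Q[X] = E_Q[X⁺] − E_Q[X⁻]` with the convention `∞ − ∞ = −∞`, where `dQ/dP = Z`. -/
noncomputable def eexp (P : Measure Ω) (Z X : Ω → ℝ) : EReal :=
  if (∫⁻ ω, ENNReal.ofReal (-(Z ω * X ω)) ∂P) = ⊤ then ⊥
  else ((∫⁻ ω, ENNReal.ofReal (Z ω * X ω) ∂P : ℝ≥0∞) : EReal)
    - ((∫⁻ ω, ENNReal.ofReal (-(Z ω * X ω)) ∂P : ℝ≥0∞) : EReal)

/-- Coherent utility function determined by a set of densities `D`. -/
noncomputable def cohU (P : Measure Ω) (D : Set (Ω → ℝ)) (X : Ω → ℝ) : EReal :=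
  ⨅ Z ∈ D, eexp P Z X

/-- The weak `L¹`-space associated with `D`. -/
def Lw (P : Measure Ω) (D : Set (Ω → ℝ)) : Set (Ω → ℝ) :=
  {X | Measurable X ∧ ⊥ < cohU P D X ∧ ⊥ < cohU P D (fun ω => -X ω)}

noncomputable def tailSup (P : Measure Ω) (D : Set (Ω → ℝ)) (X : Ω → ℝ) (n : ℕ) : ℝ≥0∞ :=
  ⨆ Z ∈ D, ∫⁻ ω in {ω | (n : ℝ) < |X ω|}, ENNReal.ofReal (Z ω * |X ω|) ∂P

/-- The strong `L¹`-space associated with `D`. -/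
def Ls (P : Measure Ω) (D : Set (Ω → ℝ)) : Set (Ω → ℝ) :=
  {X | Measurable X ∧ Tendsto (tailSup P D X) atTop (nhds 0)}

/-- Risk-neutral densities for the set `A` of attainable P&Ls. -/
def RiskNeutral (P : Measure Ω) (A : Set (Ω → ℝ)) : Set (Ω → ℝ) :=
  {Z | Z ∈ Dens P ∧ ∀ X ∈ A, eexp P Z X ≤ 0}

/-- `A` is `D`-consistent. -/
def DConsistent (P : Measure Ω) (D A : Set (Ω → ℝ)) : Prop :=
  ∃ A' ⊆ A ∩ Ls P D, D ∩ RiskNeutral P A = D ∩ RiskNeutral P A'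

/-- Sequential compactness of `D` in the weak topology `σ(L¹, L^∞)`. -/
def WSeqCompact (P : Measure Ω) (D : Set (Ω → ℝ)) : Prop :=
  ∀ Z : ℕ → Ω → ℝ, (∀ n, Z n ∈ D) → ∃ W ∈ D, ∃ φ : ℕ → ℕ, StrictMono φ ∧
    ∀ g : Ω → ℝ, Measurable g → (∃ C : ℝ, ∀ ω, |g ω| ≤ C) →
      Tendsto (fun k => ∫ ω, Z (φ k) ω * g ω ∂P) atTop (nhds (∫ ω, W ω * g ω ∂P))

/-- `D` is closed under `L¹`-convergence (within densities). -/
def L1Closed (P : Measure Ω) (D : Set (Ω → ℝ)) : Prop :=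
  ∀ Z : ℕ → Ω → ℝ, (∀ n, Z n ∈ D) → ∀ W ∈ Dens P,
    Tendsto (fun n => ∫ ω, |Z n ω - W ω| ∂P) atTop (nhds 0) → W ∈ D


lemma measurableSet_tail {X : Ω → ℝ} (hX : Measurable X) (n : ℕ) :
    MeasurableSet {ω | (n : ℝ) < |X ω|} :=
  measurableSet_lt measurable_const hX.abs

lemma setLIntegral_tail_le_tailSup (P : Measure Ω) {D : Set (Ω → ℝ)} {Z : Ω → ℝ} (hZ : Z ∈ D)
    (X : Ω → ℝ) (n : ℕ) :
    ∫⁻ ω in {ω | (n : ℝ) < |X ω|}, ENNReal.ofReal (Z ω * |X ω|) ∂P ≤ tailSup P D X n :=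
  le_iSup₂ (f := fun Z (_ : Z ∈ D) =>
    ∫⁻ ω in {ω | (n : ℝ) < |X ω|}, ENNReal.ofReal (Z ω * |X ω|) ∂P) Z hZ

/-- If the tail integral of `Z X` beyond level `n` is finite, then `Z X` is integrable. -/
lemma integrable_density_mul {P : Measure Ω} {Z X : Ω → ℝ}
    (hZ : Z ∈ Dens P) (hX : Measurable X) {n : ℕ}
    (h : ∫⁻ ω in {ω | (n : ℝ) < |X ω|}, ENNReal.ofReal (Z ω * |X ω|) ∂P ≠ ⊤) :
    Integrable (fun ω => Z ω * X ω) P := by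
  obtain ⟨hZm, hZ0, hZ1⟩ := hZ
  refine ⟨(hZm.mul hX).aestronglyMeasurable, ?_⟩
  have hS := measurableSet_tail hX n
  have habs : ∀ ω, ‖Z ω * X ω‖ₑ = ENNReal.ofReal (Z ω * |X ω|) := fun ω => by
    rw [Real.enorm_eq_ofReal_abs, abs_mul, abs_of_nonneg (hZ0 ω)]
  rw [HasFiniteIntegral, ← lintegral_add_compl _ hS]
  simp only [habs]
  refine ENNReal.add_lt_top.2 ⟨h.lt_top, ?_⟩
  calc ∫⁻ ω in {ω | (n : ℝ) < |X ω|}ᶜ, ENNReal.ofReal (Z ω * |X ω|) ∂P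
      ≤ ∫⁻ ω in {ω | (n : ℝ) < |X ω|}ᶜ, ENNReal.ofReal (Z ω) * n ∂P := by
        refine setLIntegral_mono' hS.compl fun ω hω => ?_
        rw [ENNReal.ofReal_mul (hZ0 ω)]
        gcongr
        rw [← ENNReal.ofReal_natCast]
        exact ENNReal.ofReal_le_ofReal (not_lt.1 hω)
    _ ≤ ∫⁻ ω, ENNReal.ofReal (Z ω) * n ∂P := setLIntegral_le_lintegral _ _
    _ = n := by rw [lintegral_mul_const _ hZm.ennreal_ofReal, hZ1, one_mul]
    _ < ⊤ := ENNReal.natCast_lt_top n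

lemma integrable_of_mem_Dens {P : Measure Ω} {Z : Ω → ℝ} (hZ : Z ∈ Dens P) : Integrable Z P := by
  obtain ⟨hZm, hZ0, hZ1⟩ := hZ
  refine ⟨hZm.aestronglyMeasurable, ?_⟩
  rw [HasFiniteIntegral, lintegral_congr fun ω => Real.enorm_of_nonneg (hZ0 ω), hZ1]
  exact ENNReal.one_lt_top

lemma integral_eq_one_of_mem_Dens {P : Measure Ω} {Z : Ω → ℝ} (hZ : Z ∈ Dens P) :
    ∫ ω, Z ω ∂P = 1 := by
  rw [integral_eq_lintegral_of_nonneg_ae (ae_of_all _ hZ.2.1) hZ.1.aestronglyMeasurable, hZ.2.2,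
    ENNReal.toReal_one]

/-- For integrable `Z X`, the extended expectation is the Bochner integral. -/
lemma eexp_eq_integral {P : Measure Ω} {Z X : Ω → ℝ}
    (h : Integrable (fun ω => Z ω * X ω) P) :
    eexp P Z X = ((∫ ω, Z ω * X ω ∂P : ℝ) : EReal) := by
  have hneg : ∫⁻ ω, ENNReal.ofReal (-(Z ω * X ω)) ∂P ≠ ⊤ :=
    h.neg.lintegral_lt_top.ne
  have hpos : ∫⁻ ω, ENNReal.ofReal (Z ω * X ω) ∂P ≠ ⊤ := h.lintegral_lt_top.ne
  rw [eexp, if_neg hneg, integral_eq_lintegral_pos_part_sub_lintegral_neg_part h,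
    EReal.coe_sub, EReal.coe_ennreal_toReal hpos, EReal.coe_ennreal_toReal hneg]

/-- The truncation of `X` at level `n` that vanishes where `n < |X|`. -/
noncomputable def truncTail {α : Type*} (X : α → ℝ) (n : ℕ) : α → ℝ :=
  {ω | (n : ℝ) < |X ω|}ᶜ.indicator X

lemma measurable_truncTail {X : Ω → ℝ} (hX : Measurable X) (n : ℕ) :
    Measurable (truncTail X n) :=
  hX.indicator (measurableSet_tail hX n).compl

lemma abs_truncTail_le {α : Type*} (X : α → ℝ) (n : ℕ) (ω : α) : |truncTail X n ω| ≤ n := by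
  by_cases hω : (n : ℝ) < |X ω|
  · simp [truncTail, hω]
  · simpa [truncTail, hω] using not_lt.1 hω

/-- Replacing `X` by its truncation changes the expectation by at most the tail supremum. -/
lemma abs_integral_sub_integral_truncTail_le {P : Measure Ω} {D : Set (Ω → ℝ)} {Z X : Ω → ℝ}
    (hZD : Z ∈ D) (hZ : Z ∈ Dens P) (hX : Measurable X) {n : ℕ} (hn : tailSup P D X n ≠ ⊤) :
    |∫ ω, Z ω * X ω ∂P - ∫ ω, Z ω * truncTail X n ω ∂P| ≤ (tailSup P D X n).toReal := by
  have hle := setLIntegral_tail_le_tailSup P hZD X n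
  have hint := integrable_density_mul hZ hX (ne_top_of_le_ne_top hn hle)
  have htrunc : ∫ ω, Z ω * truncTail X n ω ∂P
      = ∫ ω in {ω | (n : ℝ) < |X ω|}ᶜ, Z ω * X ω ∂P := by
    rw [← integral_indicator (measurableSet_tail hX n).compl]
    congr 1 with ω
    by_cases hω : (n : ℝ) < |X ω| <;> simp [truncTail, hω]
  rw [htrunc, ← integral_add_compl (measurableSet_tail hX n) hint, add_sub_cancel_right,
    ← Real.norm_eq_abs]
  refine (norm_integral_le_lintegral_norm _).trans (ENNReal.toReal_mono hn ?_)
  simpa only [Real.norm_eq_abs, abs_mul, abs_of_nonneg (hZ.2.1 _)] using hle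

/-- Along a sequence in `D` converging weakly to an element of `D`, the expectations of
`X ∈ L¹_s(D)` converge. -/
lemma tendsto_integral_mul_of_mem_Ls {P : Measure Ω} {D : Set (Ω → ℝ)} (hD : D ⊆ Dens P)
    {X : Ω → ℝ} (hX : X ∈ Ls P D) {Z : ℕ → Ω → ℝ} (hZ : ∀ k, Z k ∈ D) {W : Ω → ℝ} (hW : W ∈ D)
    (h : ∀ g : Ω → ℝ, Measurable g → (∃ C : ℝ, ∀ ω, |g ω| ≤ C) →
      Tendsto (fun k => ∫ ω, Z k ω * g ω ∂P) atTop (nhds (∫ ω, W ω * g ω ∂P))) :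
    Tendsto (fun k => ∫ ω, Z k ω * X ω ∂P) atTop (nhds (∫ ω, W ω * X ω ∂P)) := by
  rw [Metric.tendsto_nhds]
  intro ε hε
  obtain ⟨n, hn⟩ := (hX.2.eventually_lt_const
    (ENNReal.ofReal_pos.2 (by positivity : 0 < ε / 3))).exists
  have hbound : ∀ Y ∈ D, |∫ ω, Y ω * X ω ∂P - ∫ ω, Y ω * truncTail X n ω ∂P| < ε / 3 :=
    fun Y hY => (abs_integral_sub_integral_truncTail_le hY (hD hY) hX.1 hn.ne_top).trans_lt
      ((ENNReal.lt_ofReal_iff_toReal_lt hn.ne_top).1 hn)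
  filter_upwards [Metric.tendsto_nhds.1
    (h _ (measurable_truncTail hX.1 n) ⟨n, abs_truncTail_le X n⟩) (ε / 3) (by positivity)] with k hk
  have hZk := abs_lt.1 (hbound _ (hZ k))
  have hWk := abs_lt.1 (hbound _ hW)
  rw [Real.dist_eq, abs_lt] at hk ⊢
  constructor <;> linarith [hk.1, hk.2, hZk.1, hZk.2, hWk.1, hWk.2]

/-- If `D ⊆ 𝒫` is weakly compact and `X ∈ L¹_s(D)`, then the set of extreme
measures `𝒳_D(X)` is nonempty: there is `Q ∈ D` with `E_Q[X] = inf_{Q' ∈ D} E_{Q'}[X] ∈ (−∞, ∞)`. -/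
theorem stmt_6 (P : Measure Ω) [IsProbabilityMeasure P] (D : Set (Ω → ℝ))
    (hDsub : D ⊆ Dens P) (hDne : D.Nonempty) (hDcomp : WSeqCompact P D)
    (X : Ω → ℝ) (hX : X ∈ Ls P D) :
    ∃ Z ∈ D, eexp P Z X = cohU P D X ∧ ⊥ < cohU P D X ∧ cohU P D X < ⊤ := by
  obtain ⟨n, hn⟩ := (hX.2.eventually_lt_const ENNReal.zero_lt_top).exists
  have hint : ∀ Z ∈ D, Integrable (fun ω => Z ω * X ω) P := fun Z hZ =>
    integrable_density_mul (n := n) (hDsub hZ) hX.1 <| ne_top_of_le_ne_top hn.ne <|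
      setLIntegral_tail_le_tailSup P hZ X n
  have hbdd : BddBelow ((fun Z => ∫ ω, Z ω * X ω ∂P) '' D) := by
    refine ⟨-(n + (tailSup P D X n).toReal), ?_⟩
    rintro _ ⟨Z, hZ, rfl⟩
    have hZn : |∫ ω, Z ω * truncTail X n ω ∂P| ≤ n := by
      calc |∫ ω, Z ω * truncTail X n ω ∂P| ≤ ∫ ω, Z ω * n ∂P := by
            rw [← Real.norm_eq_abs]
            refine norm_integral_le_of_norm_le ((integrable_of_mem_Dens (hDsub hZ)).mul_const _)
              (ae_of_all _ fun ω => ?_)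
            rw [Real.norm_eq_abs, abs_mul, abs_of_nonneg ((hDsub hZ).2.1 ω)]
            exact mul_le_mul_of_nonneg_left (abs_truncTail_le X n ω) ((hDsub hZ).2.1 ω)
        _ = n := by rw [integral_mul_const, integral_eq_one_of_mem_Dens (hDsub hZ), one_mul]
    have htail := abs_integral_sub_integral_truncTail_le hZ (hDsub hZ) hX.1 hn.ne
    dsimp only
    linarith [(abs_le.1 hZn).1, (abs_le.1 htail).1]
  obtain ⟨u, -, hu, huD⟩ := exists_seq_tendsto_sInf (hDne.image _) hbdd
  choose Z hZD hZu using huD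
  obtain ⟨W, hW, φ, hφ, hconv⟩ := hDcomp Z hZD
  have hlim := tendsto_integral_mul_of_mem_Ls hDsub hX (fun k => hZD (φ k)) hW hconv
  have hWinf : ∫ ω, W ω * X ω ∂P = sInf ((fun Z => ∫ ω, Z ω * X ω ∂P) '' D) := by
    refine tendsto_nhds_unique hlim ?_
    simpa only [Function.comp_def, ← hZu] using hu.comp hφ.tendsto_atTop
  have hWU : eexp P W X = cohU P D X := by
    refine le_antisymm (le_iInf₂ fun Y hY => ?_) (iInf₂_le W hW)
    rw [eexp_eq_integral (hint W hW), eexp_eq_integral (hint Y hY), EReal.coe_le_coe_iff, hWinf]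
    exact csInf_le hbdd ⟨Y, hY, rfl⟩
  refine ⟨W, hW, hWU, ?_, ?_⟩ <;> rw [← hWU, eexp_eq_integral (hint W hW)]
  · exact EReal.bot_lt_coe _
  · exact EReal.coe_lt_top _
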